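/- For every real n > 0: (i) lim_{s→+∞} s · f_n(s) = 1, and (ii) lim_{s→−∞} f_n(s) / |s| = 1/n. -/

import Mathlib

open MeasureTheory

/-- `I k s = ∫₀^∞ x^k e^{-x⁴/4 - s x²/2} dx`. -/
noncomputable def I (k s : ℝ) : ℝ :=
  ∫ x in Set.Ioi (0 : ℝ), x ^ k * Real.exp (-x ^ 4 / 4 - s * x ^ 2 / 2)

/-- The universal profile `f n s = I (n+1) s / (n · I (n-1) s)`. -/
noncomputable def f (n s : ℝ) : ℝ := I (n + 1) s / (n * I (n - 1) s)


lemma exponent_bound (s x : ℝ) :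
    Real.exp (-x ^ 4 / 4 - s * x ^ 2 / 2) ≤
      Real.exp ((s - 1) ^ 2 / 4) * Real.exp (-(1 / 2) * x ^ 2) := by
  rw [← Real.exp_add]
  apply Real.exp_le_exp.mpr
  nlinarith [sq_nonneg (x ^ 2 / 2 + (s - 1) / 2)]

lemma I_integrable (k s : ℝ) (hk : -1 < k) :
    IntegrableOn (fun x : ℝ => x ^ k * Real.exp (-x ^ 4 / 4 - s * x ^ 2 / 2)) (Set.Ioi 0) := by
  have h := (integrableOn_rpow_mul_exp_neg_mul_sq (b := 1 / 2) (by norm_num) hk).const_mul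
    (Real.exp ((s - 1) ^ 2 / 4))
  refine Integrable.mono' h ?_ ?_
  · apply Measurable.aestronglyMeasurable
    fun_prop
  · filter_upwards [ae_restrict_mem measurableSet_Ioi] with x hx
    have hx0 : 0 < x := hx
    have h1 := Real.rpow_pos_of_pos hx0 k
    rw [Real.norm_of_nonneg (by positivity)]
    have := mul_le_mul_of_nonneg_left (exponent_bound s x) h1.le
    linarith

lemma I_pos (k s : ℝ) (hk : -1 < k) : 0 < I k s := by
  unfold I
  have hne : volume (Set.Ioi (0 : ℝ)) ≠ 0 := by simp
  rw [setIntegral_pos_iff_support_of_nonneg_ae]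
  · have : Function.support (fun x : ℝ => x ^ k * Real.exp (-x ^ 4 / 4 - s * x ^ 2 / 2)) ∩
        Set.Ioi 0 = Set.Ioi 0 := by
      apply Set.inter_eq_right.mpr
      intro x hx
      have hx0 : 0 < x := hx
      have h1 := Real.rpow_pos_of_pos hx0 k
      exact (mul_pos h1 (Real.exp_pos _)).ne'
    rw [this]
    simp
  · filter_upwards [ae_restrict_mem measurableSet_Ioi] with x hx
    have hx0 : 0 < x := hx
    have h1 := Real.rpow_pos_of_pos hx0 k
    simp only [Pi.zero_apply]
    positivity
  · exact I_integrable k s hk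

lemma I_tendsto (k s : ℝ) :
    Filter.Tendsto (fun x : ℝ => x ^ k * Real.exp (-x ^ 4 / 4 - s * x ^ 2 / 2))
      Filter.atTop (nhds 0) := by
  have h0 := (rpow_mul_exp_neg_mul_sq_isLittleO_exp_neg (b := 1 / 2) (by norm_num) k).trans_tendsto
    (Real.tendsto_exp_atBot.comp
      (Filter.tendsto_id.const_mul_atTop_of_neg (r := -(1 / 2 : ℝ)) (by norm_num)))
  have h := h0.const_mul (Real.exp ((s - 1) ^ 2 / 4))
  rw [mul_zero] at h
  refine tendsto_of_tendsto_of_tendsto_of_le_of_le' tendsto_const_nhds h ?_ ?_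
  · filter_upwards [Filter.eventually_gt_atTop 0] with x hx0
    have h1 := Real.rpow_pos_of_pos hx0 k
    positivity
  · filter_upwards [Filter.eventually_gt_atTop 0] with x hx0
    have h1 := Real.rpow_pos_of_pos hx0 k
    have := mul_le_mul_of_nonneg_left (exponent_bound s x) h1.le
    linarith

lemma I_rec (k s : ℝ) (hk : 0 < k) : k * I (k - 1) s = I (k + 3) s + s * I (k + 1) s := by
  have i1 := (I_integrable (k - 1) s (by linarith)).const_mul k
  have i2 := I_integrable (k + 3) s (by linarith)
  have i3 := (I_integrable (k + 1) s (by linarith)).const_mul s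
  have key := integral_Ioi_of_hasDerivAt_of_tendsto (a := 0) (m := 0)
    (f := fun x : ℝ => x ^ k * Real.exp (-x ^ 4 / 4 - s * x ^ 2 / 2))
    (f' := fun x : ℝ => k * (x ^ (k - 1) * Real.exp (-x ^ 4 / 4 - s * x ^ 2 / 2))
      - (x ^ (k + 3) * Real.exp (-x ^ 4 / 4 - s * x ^ 2 / 2)
      + s * (x ^ (k + 1) * Real.exp (-x ^ 4 / 4 - s * x ^ 2 / 2)))) ?_ ?_ (i1.sub (i2.add i3))
      (I_tendsto k s)
  · have e := integral_sub i1 (i2.add i3)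
    have e2 := integral_add i2 i3
    simp only [Pi.add_apply] at e
    rw [e, e2, integral_const_mul, integral_const_mul] at key
    simp only [Real.zero_rpow hk.ne', zero_mul, sub_zero] at key
    unfold I
    linarith
  · apply ContinuousAt.continuousWithinAt
    apply ContinuousAt.mul
    · exact Real.continuousAt_rpow_const _ _ (Or.inr hk.le)
    · fun_prop
  · intro x hx
    have hx0 : 0 < x := hx
    have h1 := Real.hasDerivAt_rpow_const (x := x) (p := k) (Or.inl hx0.ne')
    have h2 : HasDerivAt (fun x : ℝ => -x ^ 4 / 4 - s * x ^ 2 / 2) (-x ^ 3 - s * x) x := by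
      have a := ((hasDerivAt_pow 4 x).neg.div_const 4).sub
        (((hasDerivAt_pow 2 x).const_mul s).div_const 2)
      refine a.congr_deriv ?_
      norm_num
      ring
    refine (h1.mul h2.exp).congr_deriv ?_
    have e3 : x ^ (k + 3) = x ^ k * x ^ 3 := by
      rw [Real.rpow_add hx0]; norm_cast
    have e1 : x ^ (k + 1) = x ^ k * x := by
      rw [Real.rpow_add hx0, Real.rpow_one]
    rw [e3, e1]
    ring

lemma I_quad (k s t : ℝ) (hk : -1 < k) :
    0 ≤ I (k + 4) s - 2 * t * I (k + 2) s + t ^ 2 * I k s := by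
  have i0 := (I_integrable k s hk).const_mul (t ^ 2)
  have i2 := (I_integrable (k + 2) s (by linarith)).const_mul (2 * t)
  have i4 := I_integrable (k + 4) s (by linarith)
  have e1 := integral_add (i4.sub i2) i0
  have e2 := integral_sub i4 i2
  simp only [Pi.sub_apply] at e1
  rw [e2, integral_const_mul, integral_const_mul] at e1
  unfold I
  rw [← e1]
  apply setIntegral_nonneg measurableSet_Ioi
  intro x hx
  have hx0 : 0 < x := hx
  have h1 := Real.rpow_pos_of_pos hx0 k
  have r2 : x ^ (k + 2) = x ^ k * x ^ 2 := by
    rw [Real.rpow_add hx0]; norm_cast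
  have r4 : x ^ (k + 4) = x ^ k * x ^ 4 := by
    rw [Real.rpow_add hx0]; norm_cast
  rw [r2, r4]
  have : 0 ≤ x ^ k * Real.exp (-x ^ 4 / 4 - s * x ^ 2 / 2) * (x ^ 2 - t) ^ 2 := by positivity
  linarith

lemma I_quart (k s t : ℝ) (hk : -1 < k) :
    0 ≤ I (k + 8) s - 4 * t * I (k + 6) s + 6 * t ^ 2 * I (k + 4) s
      - 4 * t ^ 3 * I (k + 2) s + t ^ 4 * I k s := by
  have i0 := (I_integrable k s hk).const_mul (t ^ 4)
  have i2 := (I_integrable (k + 2) s (by linarith)).const_mul (4 * t ^ 3)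
  have i4 := (I_integrable (k + 4) s (by linarith)).const_mul (6 * t ^ 2)
  have i6 := (I_integrable (k + 6) s (by linarith)).const_mul (4 * t)
  have i8 := I_integrable (k + 8) s (by linarith)
  have e1 := integral_add (((i8.sub i6).add i4).sub i2) i0
  have e2 := integral_sub ((i8.sub i6).add i4) i2
  have e3 := integral_add (i8.sub i6) i4
  have e4 := integral_sub i8 i6
  simp only [Pi.sub_apply, Pi.add_apply] at e1 e2 e3
  rw [e2, e3, e4, integral_const_mul, integral_const_mul, integral_const_mul,
    integral_const_mul] at e1
  unfold I
  rw [← e1]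
  apply setIntegral_nonneg measurableSet_Ioi
  intro x hx
  have hx0 : 0 < x := hx
  have h1 := Real.rpow_pos_of_pos hx0 k
  have r2 : x ^ (k + 2) = x ^ k * x ^ 2 := by
    rw [Real.rpow_add hx0]; norm_cast
  have r4 : x ^ (k + 4) = x ^ k * x ^ 4 := by
    rw [Real.rpow_add hx0]; norm_cast
  have r6 : x ^ (k + 6) = x ^ k * x ^ 6 := by
    rw [Real.rpow_add hx0]; norm_cast
  have r8 : x ^ (k + 8) = x ^ k * x ^ 8 := by
    rw [Real.rpow_add hx0]; norm_cast
  rw [r2, r4, r6, r8]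
  have : 0 ≤ x ^ k * Real.exp (-x ^ 4 / 4 - s * x ^ 2 / 2) * ((x ^ 2 - t) ^ 2) ^ 2 := by
    positivity
  linarith

lemma upper_pos (n s : ℝ) (hn : 0 < n) (hs : 0 < s) :
    1 - (n + 2) / s ^ 2 ≤ s * f n s ∧ s * f n s ≤ 1 := by
  have ha := I_pos (n - 1) s (by linarith)
  have hb := I_pos (n + 1) s (by linarith)
  have hc := I_pos (n + 3) s (by linarith)
  have hd := I_pos (n + 5) s (by linarith)
  have r0 := I_rec n s hn
  have r1 := I_rec (n + 2) s (by linarith)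
  rw [show n + 2 - 1 = n + 1 by ring, show n + 2 + 3 = n + 5 by ring,
    show n + 2 + 1 = n + 3 by ring] at r1
  unfold f
  generalize I (n - 1) s = a at *
  generalize I (n + 1) s = b at *
  generalize I (n + 3) s = c at *
  generalize I (n + 5) s = d at *
  have h1 : s * b ≤ n * a := by linarith
  have h2 : s * c ≤ (n + 2) * b := by linarith
  constructor
  · rw [← mul_div_assoc, le_div_iff₀ (by positivity)]
    have h3 : c ≤ (n + 2) / s ^ 2 * (n * a) := by
      rw [div_mul_eq_mul_div, le_div_iff₀ (by positivity)]
      nlinarith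
    linarith
  · rw [← mul_div_assoc, div_le_one (by positivity)]
    exact h1

lemma bounds_neg (n t : ℝ) (hn : 0 < n) (ht : 0 < t) :
    1 / (n + (n + 6) * (n + 2) * (1 / t ^ 2)) ≤ f n (-t) / t ∧
      f n (-t) / t ≤ 1 / n + 1 / t ^ 2 := by
  have ha := I_pos (n - 1) (-t) (by linarith)
  have hb := I_pos (n + 1) (-t) (by linarith)
  have r0 := I_rec n (-t) hn
  have r1 := I_rec (n + 2) (-t) (by linarith)
  have r2 := I_rec (n + 4) (-t) (by linarith)
  have r3 := I_rec (n + 6) (-t) (by linarith)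
  have q := I_quad (n - 1) (-t) t (by linarith)
  have q4 := I_quart (n + 1) (-t) t (by linarith)
  rw [show n - 1 + 4 = n + 3 by ring, show n - 1 + 2 = n + 1 by ring] at q
  rw [show n + 1 + 8 = n + 9 by ring, show n + 1 + 6 = n + 7 by ring,
    show n + 1 + 4 = n + 5 by ring, show n + 1 + 2 = n + 3 by ring] at q4
  rw [show n + 2 - 1 = n + 1 by ring, show n + 2 + 3 = n + 5 by ring,
    show n + 2 + 1 = n + 3 by ring] at r1
  rw [show n + 4 - 1 = n + 3 by ring, show n + 4 + 3 = n + 7 by ring,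
    show n + 4 + 1 = n + 5 by ring] at r2
  rw [show n + 6 - 1 = n + 5 by ring, show n + 6 + 3 = n + 9 by ring,
    show n + 6 + 1 = n + 7 by ring] at r3
  unfold f
  generalize I (n - 1) (-t) = a at *
  generalize I (n + 1) (-t) = b at *
  generalize I (n + 3) (-t) = m2 at *
  generalize I (n + 5) (-t) = m3 at *
  generalize I (n + 7) (-t) = m4 at *
  generalize I (n + 9) (-t) = m5 at *
  obtain rfl : m2 = n * a + t * b := by linarith
  obtain rfl : m3 = (n + 2) * b + t * (n * a + t * b) := by linarith
  obtain rfl : m4 = (n + 4) * (n * a + t * b) + t * ((n + 2) * b + t * (n * a + t * b)) := by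
    linarith
  obtain rfl : m5 = (n + 6) * ((n + 2) * b + t * (n * a + t * b)) +
    t * ((n + 4) * (n * a + t * b) + t * ((n + 2) * b + t * (n * a + t * b))) := by
    linarith
  have hlow : 0 ≤ n * t ^ 2 * (b - t * a) + (n + 6) * (n + 2) * b - (2 * n + 6) * n * t * a := by
    linarith
  have hpos : 0 < (2 * n + 6) * n * t * a := by positivity
  constructor
  · rw [div_div, div_le_div_iff₀ (by positivity) (by positivity)]
    have : b * (n + (n + 6) * (n + 2) * (1 / t ^ 2)) =
      (n * t ^ 2 * b + (n + 6) * (n + 2) * b) / t ^ 2 := by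
      field_simp
    rw [this, le_div_iff₀ (by positivity)]
    nlinarith
  · rw [div_div, div_le_iff₀ (by positivity)]
    have : (1 / n + 1 / t ^ 2) * (n * a * t) = (t ^ 2 * a + n * a) / t := by
      field_simp
    rw [this, le_div_iff₀ ht]
    nlinarith

/-- Tail asymptotics of the universal profile: `s f_n(s) → 1` as `s → +∞` and
`f_n(s)/|s| → 1/n` as `s → -∞`. -/
theorem universal_profile_tail_asymptotics (n : ℝ) (hn : 0 < n) :
    Filter.Tendsto (fun s : ℝ => s * f n s) Filter.atTop (nhds 1) ∧
    Filter.Tendsto (fun s : ℝ => f n s / |s|) Filter.atBot (nhds (1 / n)) := by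
  have h2 : Filter.Tendsto (fun s : ℝ => s ^ 2) Filter.atTop Filter.atTop :=
    Filter.tendsto_pow_atTop (by norm_num)
  constructor
  · have h3 : Filter.Tendsto (fun s : ℝ => 1 - (n + 2) / s ^ 2) Filter.atTop (nhds 1) := by
      simpa using (h2.const_div_atTop (n + 2)).const_sub 1
    refine tendsto_of_tendsto_of_tendsto_of_le_of_le' h3 tendsto_const_nhds ?_ ?_
    · filter_upwards [Filter.eventually_gt_atTop 0] with s hs using (upper_pos n s hn hs).1
    · filter_upwards [Filter.eventually_gt_atTop 0] with s hs using (upper_pos n s hn hs).2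
  · have h4 : Filter.Tendsto (fun t : ℝ => 1 / t ^ 2) Filter.atTop (nhds 0) :=
      h2.const_div_atTop 1
    have h5 : Filter.Tendsto (fun t : ℝ => 1 / n + 1 / t ^ 2) Filter.atTop (nhds (1 / n)) := by
      simpa using h4.const_add (1 / n)
    have h6 : Filter.Tendsto (fun t : ℝ => 1 / (n + (n + 6) * (n + 2) * (1 / t ^ 2)))
        Filter.atTop (nhds (1 / n)) := by
      have h7 := (h4.const_mul ((n + 6) * (n + 2))).const_add n
      rw [mul_zero, add_zero] at h7
      exact tendsto_const_nhds.div h7 hn.ne'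
    have h8 : Filter.Tendsto (fun t : ℝ => f n (-t) / t) Filter.atTop (nhds (1 / n)) := by
      refine tendsto_of_tendsto_of_tendsto_of_le_of_le' h6 h5 ?_ ?_
      · filter_upwards [Filter.eventually_gt_atTop 0] with t ht using (bounds_neg n t hn ht).1
      · filter_upwards [Filter.eventually_gt_atTop 0] with t ht using (bounds_neg n t hn ht).2
    refine (h8.comp Filter.tendsto_neg_atBot_atTop).congr' ?_
    filter_upwards [Filter.eventually_lt_atBot 0] with s hs
    simp [abs_of_neg hs]
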